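/- Let m ≥ 2 be an even integer and let p be a real number with 2m ≤ p < ∞. If D > 0 is such that for every n ≥ 1 and every m-homogeneous polynomial P(x) = ∑_{|α|=m} a_α x^α on the real space ℓ_p^n one has (∑_{|α|=m} |a_α|^{2mp/(mp+p−2m)})^{(mp+p−2m)/(2mp)} ≤ D·‖P‖, then D ≥ 2^{(mp+p−2m)/(4p)} · (m/2)^{m/p}. -/

import Mathlib

open Finset

/-- The `ℓ_p` norm on `ℝ^n` for a real exponent `p`. -/
noncomputable def lpNorm {n : ℕ} (p : ℝ) (x : Fin n → ℝ) : ℝ :=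
  (∑ i, |x i| ^ p) ^ (1 / p)

/-- The sup norm of the `m`-homogeneous polynomial with coefficients `a`
over the unit ball of the real space `ℓ_p^n`. -/
noncomputable def polyNorm (p : ℝ) (m n : ℕ) (a : (Fin n → ℕ) → ℝ) : ℝ :=
  sSup {y : ℝ | ∃ x : Fin n → ℝ, lpNorm p x ≤ 1 ∧
    y = |∑ α ∈ Finset.Nat.antidiagonalTuple n m, a α * ∏ i, x i ^ α i|}

/-!
Write `m = 2k` and test the inequality on `P(x, y) = ∏ i, (x i ^ 2 - y i ^ 2)` in the `2k` variables
`x 1, …, x k, y 1, …, y k`. Expanding the product gives `2 ^ k` distinct monomials with coefficients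
`± 1`. On the unit ball of `ℓ_p`, each factor is at most `(|x i| ^ p + |y i| ^ p) ^ (2 / p)`, and
the numbers `|x i| ^ p + |y i| ^ p` have sum at most `1`, so the inequality between the arithmetic
and the geometric mean gives `‖P‖ ≤ k ^ (-2k / p)`.
-/

lemma sum_extend_zero_eq_sum {ι κ M N : Type*} [Fintype ι] [Zero M] [AddCommMonoid N]
    {e : ι → κ} (he : Function.Injective e) {s : Finset κ} (hes : ∀ i, e i ∈ s) (c : ι → M)
    {F : κ → M → N} (hF : ∀ α, F α 0 = 0) :
    ∑ α ∈ s, F α (Function.extend e c 0 α) = ∑ i, F (e i) (c i) := by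
  symm
  refine sum_of_injOn e he.injOn (fun i _ => hes i) (fun α _ hα => ?_) fun i _ => ?_
  · have hα' : ¬∃ i, e i = α := by simpa using hα
    rw [Function.extend_apply' _ _ _ hα', Pi.zero_apply, hF]
  · rw [he.extend_apply]

lemma prod_le_sum_div_card_pow_card {ι : Type*} (s : Finset ι) {z : ι → ℝ}
    (hz : ∀ i ∈ s, 0 ≤ z i) : ∏ i ∈ s, z i ≤ ((∑ i ∈ s, z i) / #s) ^ #s := by
  rcases s.eq_empty_or_nonempty with rfl | hs
  · simp
  have hcard : (0 : ℝ) < #s := by exact_mod_cast hs.card_pos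
  have amgm : (∏ i ∈ s, z i) ^ (#s : ℝ)⁻¹ ≤ (∑ i ∈ s, z i) / #s := by
    simpa using Real.geom_mean_le_arith_mean s 1 z (by simp) (by simpa using hcard) hz
  rwa [Real.rpow_inv_le_iff_of_pos (prod_nonneg hz) (div_nonneg (sum_nonneg hz) hcard.le) hcard,
    Real.rpow_natCast] at amgm

lemma abs_sq_sub_sq_le_rpow_add_rpow {p : ℝ} (hp : 0 < p) (a b : ℝ) :
    |a ^ 2 - b ^ 2| ≤ (|a| ^ p + |b| ^ p) ^ (2 / p) := by
  have sq_eq (c : ℝ) : c ^ 2 = (|c| ^ p) ^ (2 / p) := by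
    rw [← Real.rpow_mul (abs_nonneg c), mul_div_cancel₀ _ hp.ne', Real.rpow_two, sq_abs]
  have sq_le_left : a ^ 2 ≤ (|a| ^ p + |b| ^ p) ^ (2 / p) := by
    rw [sq_eq a]
    gcongr
    exact le_add_of_nonneg_right (by positivity)
  have sq_le_right : b ^ 2 ≤ (|a| ^ p + |b| ^ p) ^ (2 / p) := by
    rw [sq_eq b]
    gcongr
    exact le_add_of_nonneg_left (by positivity)
  exact abs_sub_le_of_nonneg_of_le (sq_nonneg a) sq_le_left (sq_nonneg b) sq_le_right

lemma lpNorm_le_one_iff {n : ℕ} {p : ℝ} (hp : 0 < p) (x : Fin n → ℝ) :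
    lpNorm p x ≤ 1 ↔ ∑ i, |x i| ^ p ≤ 1 := by
  rw [lpNorm, one_div, Real.rpow_inv_le_iff_of_pos (by positivity) zero_le_one hp, Real.one_rpow]

lemma polyNorm_nonneg (p : ℝ) (m n : ℕ) (a : (Fin n → ℕ) → ℝ) : 0 ≤ polyNorm p m n a := by
  refine Real.sSup_nonneg ?_
  rintro _ ⟨x, -, rfl⟩
  exact abs_nonneg _

section ExtremalPolynomial

variable {k : ℕ}

/-- The exponent vector of the monomial `∏ i, x (s i, i) ^ 2`, which picks one variable out of each
of the `k` pairs `x (0, i), x (1, i)`; the variables are numbered by `finProdFinEquiv`. -/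
def choiceExponent (s : Fin k → Fin 2) (j : Fin (2 * k)) : ℕ :=
  if (finProdFinEquiv.symm j).1 = s (finProdFinEquiv.symm j).2 then 2 else 0

/-- The sign of the monomial `∏ i, x (s i, i) ^ 2` in the expansion of
`∏ i, (x (0, i) ^ 2 - x (1, i) ^ 2)`. -/
def choiceSign (s : Fin k → Fin 2) : ℝ :=
  ∏ i, (-1) ^ (s i : ℕ)

/-- The coefficients of the extremal polynomial `∏ i, (x (0, i) ^ 2 - x (1, i) ^ 2)`, which is
homogeneous of degree `2 * k` in `2 * k` variables. -/
noncomputable def prodSqSubSqCoeff (k : ℕ) : (Fin (2 * k) → ℕ) → ℝ :=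
  Function.extend choiceExponent choiceSign 0

lemma choiceExponent_finProdFinEquiv (s : Fin k → Fin 2) (b : Fin 2) (i : Fin k) :
    choiceExponent s (finProdFinEquiv (b, i)) = if b = s i then 2 else 0 := by
  rw [choiceExponent, Equiv.symm_apply_apply]

lemma choiceExponent_injective : Function.Injective (choiceExponent (k := k)) := by
  intro s t hst
  funext i
  have h := congrFun hst (finProdFinEquiv (s i, i))
  by_contra hne
  simp [choiceExponent_finProdFinEquiv, hne] at h

lemma choiceExponent_mem_antidiagonalTuple (s : Fin k → Fin 2) :
    choiceExponent s ∈ Finset.Nat.antidiagonalTuple (2 * k) (2 * k) := by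
  rw [Finset.Nat.mem_antidiagonalTuple, ← finProdFinEquiv.sum_comp, Fintype.sum_prod_type_right]
  simp [choiceExponent_finProdFinEquiv, mul_comm]

lemma prod_pow_choiceExponent {R : Type*} [CommMonoid R] (s : Fin k → Fin 2)
    (x : Fin (2 * k) → R) :
    ∏ j, x j ^ choiceExponent s j = ∏ i, x (finProdFinEquiv (s i, i)) ^ 2 := by
  rw [← finProdFinEquiv.prod_comp, Fintype.prod_prod_type_right]
  simp [choiceExponent_finProdFinEquiv, pow_ite]

lemma abs_choiceSign (s : Fin k → Fin 2) : |choiceSign s| = 1 := by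
  simp [choiceSign, abs_prod]

lemma sum_prodSqSubSqCoeff_mul_prod_pow (x : Fin (2 * k) → ℝ) :
    ∑ α ∈ Finset.Nat.antidiagonalTuple (2 * k) (2 * k), prodSqSubSqCoeff k α * ∏ j, x j ^ α j =
      ∏ i : Fin k, (x (finProdFinEquiv (0, i)) ^ 2 - x (finProdFinEquiv (1, i)) ^ 2) := by
  calc ∑ α ∈ Finset.Nat.antidiagonalTuple (2 * k) (2 * k), prodSqSubSqCoeff k α * ∏ j, x j ^ α j
      = ∑ s, choiceSign s * ∏ j, x j ^ choiceExponent s j :=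
        sum_extend_zero_eq_sum choiceExponent_injective choiceExponent_mem_antidiagonalTuple
          choiceSign (F := fun α c => c * ∏ j, x j ^ α j) fun _ => zero_mul _
    _ = ∑ s : Fin k → Fin 2, ∏ i, ((-1) ^ (s i : ℕ) * x (finProdFinEquiv (s i, i)) ^ 2) := by
        simp only [prod_pow_choiceExponent, choiceSign, prod_mul_distrib]
    _ = ∏ i, ∑ b : Fin 2, (-1) ^ (b : ℕ) * x (finProdFinEquiv (b, i)) ^ 2 := by
        rw [prod_univ_sum, Fintype.piFinset_univ]
    _ = ∏ i, (x (finProdFinEquiv (0, i)) ^ 2 - x (finProdFinEquiv (1, i)) ^ 2) := by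
        simp [Fin.sum_univ_two, sub_eq_add_neg]

lemma sum_abs_prodSqSubSqCoeff_rpow (k : ℕ) {q : ℝ} (hq : 0 < q) :
    ∑ α ∈ Finset.Nat.antidiagonalTuple (2 * k) (2 * k), |prodSqSubSqCoeff k α| ^ q = 2 ^ k := by
  calc ∑ α ∈ Finset.Nat.antidiagonalTuple (2 * k) (2 * k), |prodSqSubSqCoeff k α| ^ q
      = ∑ s : Fin k → Fin 2, |choiceSign s| ^ q :=
        sum_extend_zero_eq_sum choiceExponent_injective choiceExponent_mem_antidiagonalTuple
          choiceSign (F := fun _ c => |c| ^ q) fun _ => by rw [abs_zero, Real.zero_rpow hq.ne']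
    _ = 2 ^ k := by simp [abs_choiceSign]

lemma prod_abs_sq_sub_sq_le {p : ℝ} (hp : 0 < p) {x : Fin (2 * k) → ℝ}
    (hx : ∑ j, |x j| ^ p ≤ 1) :
    ∏ i : Fin k, |x (finProdFinEquiv (0, i)) ^ 2 - x (finProdFinEquiv (1, i)) ^ 2| ≤
      (k : ℝ)⁻¹ ^ (2 * k / p) := by
  set z : Fin k → ℝ := fun i =>
    |x (finProdFinEquiv (0, i))| ^ p + |x (finProdFinEquiv (1, i))| ^ p
  have hz : ∀ i ∈ univ, 0 ≤ z i := fun i _ => by positivity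
  have hsum : ∑ i, z i ≤ 1 := by
    rw [← finProdFinEquiv.sum_comp, Fintype.sum_prod_type_right] at hx
    simpa only [Fin.sum_univ_two] using hx
  have hprod : ∏ i, z i ≤ (k : ℝ)⁻¹ ^ k :=
    calc ∏ i, z i ≤ ((∑ i, z i) / k) ^ k := by
          simpa using prod_le_sum_div_card_pow_card univ hz
      _ ≤ (1 / k) ^ k := by
          have := sum_nonneg hz
          gcongr
      _ = (k : ℝ)⁻¹ ^ k := by rw [one_div]
  calc ∏ i : Fin k, |x (finProdFinEquiv (0, i)) ^ 2 - x (finProdFinEquiv (1, i)) ^ 2|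
      ≤ ∏ i, z i ^ (2 / p) :=
        prod_le_prod (fun _ _ => abs_nonneg _) fun _ _ => abs_sq_sub_sq_le_rpow_add_rpow hp _ _
    _ = (∏ i, z i) ^ (2 / p) := Real.finsetProd_rpow _ _ hz _
    _ ≤ ((k : ℝ)⁻¹ ^ k) ^ (2 / p) := Real.rpow_le_rpow (prod_nonneg hz) hprod (by positivity)
    _ = (k : ℝ)⁻¹ ^ (2 * k / p) := by
        rw [← Real.rpow_natCast_mul (by positivity)]
        ring_nf

lemma polyNorm_prodSqSubSqCoeff_le (k : ℕ) {p : ℝ} (hp : 0 < p) :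
    polyNorm p (2 * k) (2 * k) (prodSqSubSqCoeff k) ≤ (k : ℝ)⁻¹ ^ (2 * k / p) := by
  refine Real.sSup_le ?_ (by positivity)
  rintro _ ⟨x, hx, rfl⟩
  rw [sum_prodSqSubSqCoeff_mul_prod_pow, abs_prod]
  exact prod_abs_sq_sub_sq_le hp ((lpNorm_le_one_iff hp x).1 hx)

end ExtremalPolynomial

theorem real_HL_lower_bound_even_general {m : ℕ} (hm : m ≠ 0) (hme : Even m) {p q D : ℝ}
    (hp : 0 < p) (hq : 0 < q)
    (h : ∀ a : (Fin m → ℕ) → ℝ,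
      (∑ α ∈ Finset.Nat.antidiagonalTuple m m, |a α| ^ q) ^ (1 / q) ≤ D * polyNorm p m m a) :
    2 ^ (m / (2 * q)) * ((m : ℝ) / 2) ^ (m / p) ≤ D := by
  obtain ⟨k, rfl⟩ := hme.two_dvd
  have hk : (0 : ℝ) < k := by exact_mod_cast Nat.pos_of_ne_zero (right_ne_zero_of_mul hm)
  have htest : (2 : ℝ) ^ (k / q) ≤ D * polyNorm p (2 * k) (2 * k) (prodSqSubSqCoeff k) := by
    simpa only [sum_abs_prodSqSubSqCoeff_rpow k hq, ← Real.rpow_natCast_mul zero_le_two,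
      mul_one_div] using h (prodSqSubSqCoeff k)
  have hD : 0 < D :=
    pos_of_mul_pos_left ((Real.rpow_pos_of_pos two_pos _).trans_le htest) (polyNorm_nonneg ..)
  have hbound : (2 : ℝ) ^ (k / q) ≤ D / (k : ℝ) ^ (2 * k / p) :=
    calc (2 : ℝ) ^ (k / q) ≤ D * (k : ℝ)⁻¹ ^ (2 * k / p) :=
          htest.trans (mul_le_mul_of_nonneg_left (polyNorm_prodSqSubSqCoeff_le k hp) hD.le)
      _ = D / (k : ℝ) ^ (2 * k / p) := by rw [Real.inv_rpow hk.le, ← div_eq_mul_inv]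
  rw [le_div_iff₀ (Real.rpow_pos_of_pos hk _)] at hbound
  rwa [Nat.cast_mul, Nat.cast_two, mul_div_mul_left _ _ two_ne_zero,
    mul_div_cancel_left₀ _ two_ne_zero]

/-- For even `m ≥ 2` and `2m ≤ p < ∞`, any constant `D` for the real
polynomial Hardy–Littlewood inequality satisfies `D ≥ 2^{(mp+p-2m)/(4p)} (m/2)^{m/p}`. -/
theorem real_HL_lower_bound_even (m : ℕ) (hm : 2 ≤ m) (hme : Even m)
    (p : ℝ) (hp : 2 * (m : ℝ) ≤ p) (D : ℝ) (hD : 0 < D)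
    (h : ∀ n : ℕ, 1 ≤ n → ∀ a : (Fin n → ℕ) → ℝ,
      (∑ α ∈ Finset.Nat.antidiagonalTuple n m, |a α|
          ^ (2 * (m : ℝ) * p / ((m : ℝ) * p + p - 2 * m)))
        ^ (((m : ℝ) * p + p - 2 * m) / (2 * (m : ℝ) * p)) ≤ D * polyNorm p m n a) :
    2 ^ (((m : ℝ) * p + p - 2 * m) / (4 * p)) * ((m : ℝ) / 2) ^ ((m : ℝ) / p) ≤ D := by
  have hm0 : (0 : ℝ) < m := by exact_mod_cast two_pos.trans_le hm
  have hp0 : 0 < p := by linarith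
  have hden : 0 < (m : ℝ) * p + p - 2 * m := by nlinarith
  convert real_HL_lower_bound_even_general (by omega) hme hp0
    (q := 2 * m * p / (m * p + p - 2 * m)) (by positivity)
    (by simpa only [one_div_div] using h m (by omega)) using 3
  field_simp
  ring
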